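/- (Kac's central limit theorem) For a positive integer N and real u, let B_N(u) = Σ_{n=1}^N cos(u·log p_n), where p_n is the n-th prime. Then for all real numbers x_1 < x_2, lim_{N→∞} lim_{T→∞} (1/T)·Leb{ u ∈ [T, 2T] : x_1/√2 < B_N(u)/√N < x_2/√2 } = (1/√(2π)) ∫_{x_1}^{x_2} e^{-x²/2} dx, where Leb denotes Lebesgue measure (so that (1/T)·Leb on [T,2T] is the uniform probability measure) and the inner limit over T exists for each fixed N. -/

import Mathlib

open MeasureTheory Filter Real

/-!
By unique factorisation the logarithms of the primes are linearly independent over `ℤ`, so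
(Kronecker–Weyl) the line `u ↦ (u log p_n / 2π)_n` equidistributes on every finite-dimensional
torus: its Fourier modes average to zero over long windows. Hence, for fixed `N`, the cosines
`cos (u log p_n)` with `u` uniform on `[T, 2T]` converge jointly in distribution, as `T → ∞`, to
i.i.d. variables `cos (2π Z_n)` with `Z_n` uniform on the circle. The law of their sum has no atoms
for `N ≠ 0`, so the portmanteau theorem gives the inner limit. These variables have mean `0` and
variance `1/2`, so the classical central limit theorem gives the outer one.
-/

open AddCircle ProbabilityTheory UnitAddTorus
open scoped Topology

section WeakConvergence

lemma lipschitzWith_integral {X E : Type*} [TopologicalSpace X] [CompactSpace X]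
    [MeasurableSpace X] [OpensMeasurableSpace X] [NormedAddCommGroup E] [NormedSpace ℝ E]
    [SecondCountableTopologyEither X E] (μ : Measure X) [IsProbabilityMeasure μ] :
    LipschitzWith 1 fun f : C(X, E) => ∫ x, f x ∂μ := by
  have hint (f : C(X, E)) : Integrable f μ :=
    f.continuous.integrable_of_hasCompactSupport (.of_compactSpace f)
  refine LipschitzWith.of_dist_le_mul fun f g => ?_
  rw [dist_eq_norm, ← integral_sub (hint f) (hint g)]
  have hfg : ∀ᵐ x ∂μ, ‖f x - g x‖ ≤ dist f g :=
    .of_forall fun x => (dist_eq_norm (f x) (g x)).symm.trans_le (f.dist_apply_le_dist x)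
  simpa using norm_integral_le_of_norm_le_const hfg

theorem tendsto_of_forall_integral_tendsto_of_span_dense {X ι 𝕜 : Type*} [RCLike 𝕜]
    [TopologicalSpace X] [CompactSpace X] [MeasurableSpace X] [OpensMeasurableSpace X]
    {l : Filter ι} {μ : ι → ProbabilityMeasure X} {ν : ProbabilityMeasure X} {S : Set C(X, 𝕜)}
    (hS : (Submodule.span 𝕜 S).topologicalClosure = ⊤)
    (h : ∀ f ∈ S, Tendsto (fun i => ∫ x, f x ∂(μ i : Measure X)) l
      (𝓝 (∫ x, f x ∂(ν : Measure X)))) :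
    Tendsto μ l (𝓝 ν) := by
  have hint (f : C(X, 𝕜)) (ρ : ProbabilityMeasure X) : Integrable f (ρ : Measure X) :=
    f.continuous.integrable_of_hasCompactSupport (.of_compactSpace f)
  let good : Set C(X, 𝕜) := {f | Tendsto (fun i => ∫ x, f x ∂(μ i : Measure X)) l
    (𝓝 (∫ x, f x ∂(ν : Measure X)))}
  have hclosed : IsClosed good :=
    (LipschitzWith.uniformEquicontinuous _ 1
      fun i => lipschitzWith_integral (μ i : Measure X)).equicontinuous.isClosed_setOfPred_tendsto
      (lipschitzWith_integral (ν : Measure X)).continuous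
  have hspan : (Submodule.span 𝕜 S : Set C(X, 𝕜)) ⊆ good := fun f hf => by
    induction hf using Submodule.span_induction with
    | mem f hf => exact h f hf
    | zero => simpa [good] using tendsto_const_nhds
    | add f g _ _ hf hg =>
      have hadd (ρ : ProbabilityMeasure X) := integral_add (hint f ρ) (hint g ρ)
      simpa only [good, Set.mem_ofPred_eq, ContinuousMap.add_apply, hadd] using hf.add hg
    | smul a f _ hf =>
      simpa only [good, Set.mem_ofPred_eq, ContinuousMap.smul_apply, integral_smul]
        using hf.const_smul a
  rw [ProbabilityMeasure.tendsto_iff_forall_integral_rclike_tendsto 𝕜]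
  intro f
  have hf : f.toContinuousMap ∈ closure (Submodule.span 𝕜 S : Set C(X, 𝕜)) := by
    rw [← Submodule.topologicalClosure_coe, hS]
    trivial
  exact closure_minimal hspan hclosed hf

variable {ι : Type*} {Ω : ι → Type*} {m : ∀ i, MeasurableSpace (Ω i)} {Ω' : Type*}
  {m' : MeasurableSpace Ω'} {μ : (i : ι) → Measure (Ω i)} [∀ i, IsProbabilityMeasure (μ i)]
  {μ' : Measure Ω'} [IsProbabilityMeasure μ'] {l : Filter ι}

lemma tendsto_measureReal_preimage_of_null_frontier {E : Type*} [TopologicalSpace E]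
    [HasOuterApproxClosed E] [MeasurableSpace E]
    [BorelSpace E] {X : (i : ι) → Ω i → E} {Z : Ω' → E}
    (h : TendstoInDistribution X l Z μ μ') {s : Set E} (hs : MeasurableSet s)
    (hfr : μ'.map Z (frontier s) = 0) :
    Tendsto (fun i => (μ i).real (X i ⁻¹' s)) l (𝓝 (μ'.real (Z ⁻¹' s))) := by
  have hne : μ'.map Z s ≠ ⊤ := by
    rw [Measure.map_apply_of_aemeasurable h.aemeasurable_limit hs]
    exact measure_ne_top _ _
  have hlim := (ENNReal.tendsto_toReal hne).comp
    (ProbabilityMeasure.tendsto_measure_of_null_frontier_of_tendsto' h.tendsto hfr)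
  simpa only [Function.comp_def, ProbabilityMeasure.coe_mk, measureReal_def,
    Measure.map_apply_of_aemeasurable (h.forall_aemeasurable _) hs,
    Measure.map_apply_of_aemeasurable h.aemeasurable_limit hs] using hlim

lemma tendsto_measureReal_preimage_Ioo {X : (i : ι) → Ω i → ℝ} {Z : Ω' → ℝ}
    (h : TendstoInDistribution X l Z μ μ') [NullSingletonClass (μ'.map Z)] (a b : ℝ) :
    Tendsto (fun i => (μ i).real (X i ⁻¹' Set.Ioo a b)) l (𝓝 (μ'.real (Z ⁻¹' Set.Ioo a b))) := by
  refine tendsto_measureReal_preimage_of_null_frontier h measurableSet_Ioo ?_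
  rcases lt_or_ge a b with hab | hab
  · rw [frontier_Ioo hab]
    exact (Set.toFinite {a, b}).measure_zero _
  · simp [Set.Ioo_eq_empty_of_le hab]

end WeakConvergence

section Atomless

lemma nullSingletonClass_map_of_countable_preimage {X Y : Type*} [MeasurableSpace X]
    [MeasurableSpace Y] [MeasurableSingletonClass Y] {μ : Measure X} [NullSingletonClass μ]
    {f : X → Y} (hf : AEMeasurable f μ) (h : ∀ y, (f ⁻¹' {y}).Countable) :
    NullSingletonClass (μ.map f) where
  measure_singleton y := by
    rw [Measure.map_apply_of_aemeasurable hf (measurableSet_singleton y)]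
    exact (h y).measure_zero μ

lemma nullSingletonClass_haarAddCircle {T : ℝ} [hT : Fact (0 < T)] :
    NullSingletonClass (haarAddCircle : Measure (AddCircle T)) where
  measure_singleton z := by
    have hball : volume (Metric.closedBall z 0) = 0 := by
      rw [AddCircle.volume_closedBall, mul_zero, min_eq_right hT.out.le, ENNReal.ofReal_zero]
    simpa [Metric.closedBall_zero, volume_eq_smul_haarAddCircle, hT.out.not_ge] using hball

lemma nullSingletonClass_map_div_const {Ω G₀ : Type*} [MeasurableSpace Ω] [GroupWithZero G₀]
    [MeasurableSpace G₀] [MeasurableSingletonClass G₀] [MeasurableDiv G₀] {μ : Measure Ω}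
    {X : Ω → G₀} (hX : AEMeasurable X μ) [NullSingletonClass (μ.map X)] {c : G₀} (hc : c ≠ 0) :
    NullSingletonClass (μ.map fun x => X x / c) where
  measure_singleton y := by
    have hpre : (fun x => X x / c) ⁻¹' {y} = X ⁻¹' {y * c} := by
      ext x
      simp [div_eq_iff hc]
    rw [Measure.map_apply_of_aemeasurable (hX.div_const c) (measurableSet_singleton y), hpre,
      ← Measure.map_apply_of_aemeasurable hX (measurableSet_singleton _), measure_singleton]

lemma nullSingletonClass_conv_right {M : Type*} [AddGroup M] [MeasurableSpace M]
    [MeasurableAdd₂ M] [MeasurableSingletonClass M] (μ ν : Measure M) [SFinite ν]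
    [NullSingletonClass ν] : NullSingletonClass (μ ∗ ν) where
  measure_singleton c := by
    have hfib (x : M) : Prod.mk x ⁻¹' ((fun p : M × M => p.1 + p.2) ⁻¹' {c}) = {-x + c} := by
      ext y
      simp [eq_neg_add_iff_add_eq]
    have hmeas : MeasurableSet ((fun p : M × M => p.1 + p.2) ⁻¹' {c}) :=
      measurable_add (measurableSet_singleton c)
    rw [Measure.conv, Measure.map_apply measurable_add (measurableSet_singleton c),
      Measure.measure_prod_null hmeas]
    exact .of_forall fun x => by simp [hfib]

lemma nullSingletonClass_map_finsetSum {Ω M ι : Type*} [MeasurableSpace Ω] {P : Measure Ω}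
    [AddCommGroup M] [MeasurableSpace M] [MeasurableAdd₂ M]
    [MeasurableSingletonClass M] {X : ι → Ω → M} (hX : ∀ i, AEMeasurable (X i) P)
    (hindep : iIndepFun X P) {s : Finset ι} {i : ι} (hi : i ∈ s)
    [NullSingletonClass (P.map (X i))] :
    NullSingletonClass (P.map (∑ j ∈ s, X j)) := by
  classical
  have := hindep.isProbabilityMeasure
  have hsplit := hindep.indepFun_finsetSum_of_notMem₀ hX (Finset.notMem_erase i s)
  rw [← Finset.sum_erase_add s X hi, hsplit.map_add_eq_map_conv_map₀
    (Finset.aemeasurable_sum _ fun j _ => hX j) (hX i)]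
  exact nullSingletonClass_conv_right _ _

end Atomless

section LogPrimes

theorem linearIndependent_log_primes :
    LinearIndependent ℤ fun p : Nat.Primes => Real.log p := by
  rw [linearIndependent_iff']
  intro s g hg q hq
  have : Fact (q : ℕ).Prime := ⟨q.2⟩
  have hprod_real : ∏ p ∈ s, (p : ℝ) ^ g p = 1 := by
    rw [← Real.exp_zero, ← hg, Real.exp_sum]
    refine Finset.prod_congr rfl fun p _ => ?_
    rw [zsmul_eq_mul, mul_comm, Real.exp_mul, Real.exp_log (mod_cast p.2.pos), Real.rpow_intCast]
  have hprod_rat : ∏ p ∈ s, (p : ℚ) ^ g p = 1 :=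
    Rat.cast_injective (α := ℝ) (by push_cast; exact hprod_real)
  have hprod_padic : ∏ p ∈ s, (p : ℚ_[q]) ^ g p = 1 := by
    simpa using congrArg (Rat.cast : ℚ → ℚ_[q]) hprod_rat
  have hnorm (p : Nat.Primes) (hpq : p ≠ q) : ‖(p : ℚ_[q])‖ = 1 := by
    rw [Padic.norm_natCast_eq_one_iff]
    exact (Nat.coprime_primes q.2 p.2).2 fun h => hpq (Subtype.ext h.symm)
  have hq_pow : (q : ℝ) ^ (-g q) = 1 := by
    have := congrArg norm hprod_padic
    rwa [norm_prod, Finset.prod_eq_single q (fun p _ hpq => by simp [hnorm p hpq])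
      (fun h => absurd hq h), norm_zpow, Padic.norm_p, norm_one, inv_zpow'] at this
  simpa using (zpow_eq_one_iff_right₀ (by positivity) (mod_cast q.2.one_lt.ne')).1 hq_pow

lemma linearIndependent_log_nth_prime :
    LinearIndependent ℤ fun n => Real.log (Nat.nth Nat.Prime n) :=
  linearIndependent_log_primes.comp (fun n => ⟨Nat.nth Nat.Prime n, Nat.prime_nth_prime n⟩)
    fun _ _ h => Nat.nth_injective Nat.infinite_setOfPred_prime (congrArg Subtype.val h)

end LogPrimes

section Equidistribution

lemma norm_integral_exp_mul_I_le {a : ℝ} (ha : a ≠ 0) (s t : ℝ) :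
    ‖∫ u in s..t, Complex.exp (a * u * Complex.I)‖ ≤ 2 / |a| := by
  have hexp (u : ℝ) : ‖Complex.exp (a * Complex.I * u)‖ = 1 := by
    simpa [mul_right_comm] using Complex.norm_exp_ofReal_mul_I (a * u)
  simp_rw [mul_right_comm _ _ Complex.I]
  rw [integral_exp_mul_complex (by simpa using ha), norm_div]
  simp only [norm_mul, Complex.norm_I, Complex.norm_real, mul_one, Real.norm_eq_abs]
  gcongr
  exact (norm_sub_le _ _).trans_eq (by rw [hexp, hexp, one_add_one_eq_two])

lemma integral_cond_Icc_eq_intervalIntegral {E : Type*} [NormedAddCommGroup E] [NormedSpace ℝ E]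
    (f : ℝ → E) {s t : ℝ} (hst : s ≤ t) :
    ∫ u, f u ∂volume[|Set.Icc s t] = (t - s)⁻¹ • ∫ u in s..t, f u := by
  rw [ProbabilityTheory.cond, integral_smul_measure, integral_Icc_eq_integral_Ioc,
    intervalIntegral.integral_of_le hst]
  simp [hst]

lemma tendsto_integral_exp_cond_Icc {ι : Type*} {l : Filter ι} {s t : ι → ℝ}
    (hst : Tendsto (fun i => t i - s i) l atTop) {a : ℝ} (ha : a ≠ 0) :
    Tendsto (fun i => ∫ u, Complex.exp (a * u * Complex.I) ∂volume[|Set.Icc (s i) (t i)])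
      l (𝓝 0) := by
  have hbound : Tendsto (fun i => (t i - s i)⁻¹ * (2 / |a|)) l (𝓝 0) := by
    simpa using hst.inv_tendsto_atTop.mul_const (2 / |a|)
  refine squeeze_zero_norm' ?_ hbound
  filter_upwards [hst.eventually_gt_atTop 0] with i hi
  rw [integral_cond_Icc_eq_intervalIntegral _ (sub_pos.1 hi).le, norm_smul,
    Real.norm_of_nonneg (inv_nonneg.2 hi.le)]
  gcongr
  exact norm_integral_exp_mul_I_le ha _ _

lemma integral_fourier_eq_zero {T : ℝ} [hT : Fact (0 < T)] {n : ℤ} (hn : n ≠ 0) :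
    ∫ z : AddCircle T, fourier n z ∂haarAddCircle = 0 :=
  integral_eq_zero_of_add_right_eq_neg (fourier_add_half_inv_index hn hT.out)

lemma integral_re_fourier_eq_zero {T : ℝ} [Fact (0 < T)] {n : ℤ} (hn : n ≠ 0) :
    ∫ z : AddCircle T, (fourier n z).re ∂haarAddCircle = 0 := by
  have hint : Integrable (fourier n : AddCircle T → ℂ) haarAddCircle :=
    (fourier n).continuous.integrable_of_hasCompactSupport (.of_compactSpace _)
  exact (integral_re hint).trans (by rw [integral_fourier_eq_zero hn]; rfl)

lemma integral_mFourier_eq_zero {d : Type*} [Fintype d] {k : d → ℤ} (hk : k ≠ 0) :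
    ∫ z : UnitAddTorus d, mFourier k z ∂Measure.pi (fun _ => haarAddCircle) = 0 := by
  obtain ⟨i, hi⟩ := Function.ne_iff.1 hk
  simp only [mFourier, ContinuousMap.coe_mk]
  rw [integral_fintype_prod_eq_prod (fun i (z : UnitAddCircle) => fourier (k i) z)]
  exact Finset.prod_eq_zero (Finset.mem_univ i) (integral_fourier_eq_zero hi)

/-- The straight line through the origin with direction `ω`, traversed with angular velocities
`ω i`, hence the `2π`: the circle of circumference `1` is `ℝ / ℤ`. -/
noncomputable def torusLine {d : Type*} (ω : d → ℝ) (u : ℝ) : UnitAddTorus d :=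
  fun i => ((u * ω i / (2 * π) : ℝ) : UnitAddCircle)

lemma continuous_torusLine {d : Type*} (ω : d → ℝ) : Continuous (torusLine ω) :=
  continuous_pi fun _ => (AddCircle.continuous_mk' 1).comp (by fun_prop)

lemma mFourier_torusLine {d : Type*} [Fintype d] (ω : d → ℝ) (k : d → ℤ) (u : ℝ) :
    mFourier k (torusLine ω u) =
      Complex.exp ((∑ i, k i • ω i : ℝ) * u * Complex.I) := by
  have hπ : (π : ℂ) ≠ 0 := mod_cast Real.pi_ne_zero
  simp only [mFourier, ContinuousMap.coe_mk, torusLine, fourier_coe_apply, ← Complex.exp_sum]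
  push_cast
  rw [Finset.sum_mul, Finset.sum_mul]
  congr 1
  refine Finset.sum_congr rfl fun i _ => ?_
  rw [zsmul_eq_mul]
  field_simp

variable {ι : Type*} {l : Filter ι} {Ω' : Type*} {m' : MeasurableSpace Ω'} {P : Measure Ω'}
  [IsProbabilityMeasure P] {d : Type*} [Fintype d]

theorem tendstoInDistribution_of_tendsto_integral_mFourier {Ω : ι → Type*}
    {m : ∀ i, MeasurableSpace (Ω i)} {μ : (i : ι) → Measure (Ω i)}
    [∀ i, IsProbabilityMeasure (μ i)] {X : (i : ι) → Ω i → UnitAddTorus d}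
    {Z : Ω' → UnitAddTorus d} (hX : ∀ i, AEMeasurable (X i) (μ i))
    (hZ : HasLaw Z (Measure.pi fun _ => haarAddCircle) P)
    (h : ∀ k ≠ 0, Tendsto (fun i => ∫ x, mFourier k (X i x) ∂μ i) l (𝓝 0)) :
    TendstoInDistribution X l Z μ P where
  forall_aemeasurable := hX
  aemeasurable_limit := hZ.aemeasurable
  tendsto := by
    refine tendsto_of_forall_integral_tendsto_of_span_dense span_mFourier_closure_eq_top ?_
    rintro _ ⟨k, rfl⟩
    simp only [ProbabilityMeasure.coe_mk, hZ.map_eq]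
    rcases eq_or_ne k 0 with rfl | hk
    · simpa [mFourier_zero, Measure.map_apply_of_aemeasurable, hX, measureReal_def]
        using tendsto_const_nhds
    · rw [integral_mFourier_eq_zero hk]
      refine (h k hk).congr fun i => ?_
      rw [integral_map (hX i) (mFourier k).continuous.aestronglyMeasurable]

theorem tendstoInDistribution_torusLine {s t : ι → ℝ}
    [∀ i, IsProbabilityMeasure (volume[|Set.Icc (s i) (t i)])]
    (hst : Tendsto (fun i => t i - s i) l atTop) {ω : d → ℝ} (hω : LinearIndependent ℤ ω)
    {Z : Ω' → UnitAddTorus d} (hZ : HasLaw Z (Measure.pi fun _ => haarAddCircle) P) :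
    TendstoInDistribution (fun _ => torusLine ω) l Z (fun i => volume[|Set.Icc (s i) (t i)]) P := by
  refine tendstoInDistribution_of_tendsto_integral_mFourier
    (fun _ => (continuous_torusLine ω).aemeasurable) hZ fun k hk => ?_
  have hfreq : ∑ i, k i • ω i ≠ 0 := fun h => hk (funext (Fintype.linearIndependent_iff.1 hω k h))
  simpa only [mFourier_torusLine] using tendsto_integral_exp_cond_Icc hst hfreq

end Equidistribution

section CosineSums

/-- The function `x ↦ cos (2πx)` on the circle `ℝ / ℤ`, as the real part of the first Fourier
mode; it turns a uniformly distributed point of the circle into a cosine with random phase. -/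
noncomputable def circleCos (z : UnitAddCircle) : ℝ := (fourier 1 z).re

lemma circleCos_coe (x : ℝ) : circleCos x = Real.cos (2 * π * x) := by
  have harg : (2 * π * Complex.I * (1 : ℤ) * x / (1 : ℝ) : ℂ) =
      ((2 * π * x : ℝ) : ℂ) * Complex.I := by
    push_cast
    ring
  rw [circleCos, fourier_coe_apply, harg, Complex.exp_ofReal_mul_I_re]

@[fun_prop]
lemma continuous_circleCos : Continuous circleCos :=
  Complex.continuous_re.comp (fourier 1).continuous

lemma circleCos_torusLine {d : Type*} (ω : d → ℝ) (u : ℝ) (i : d) :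
    circleCos (torusLine ω u i) = Real.cos (u * ω i) := by
  rw [torusLine, circleCos_coe, mul_div_cancel₀ _ (by positivity)]

lemma circleCos_sq_add_im_sq (z : UnitAddCircle) :
    circleCos z ^ 2 + (fourier 1 z).im ^ 2 = 1 := by
  simpa [circleCos, Complex.normSq_apply, sq] using Circle.normSq_coe (toCircle z)

lemma abs_circleCos_le_one (z : UnitAddCircle) : |circleCos z| ≤ 1 := by
  rw [← sq_le_one_iff_abs_le_one, ← circleCos_sq_add_im_sq z]
  exact le_add_of_nonneg_right (sq_nonneg _)

lemma circleCos_sq (z : UnitAddCircle) : circleCos z ^ 2 = (1 + (fourier 2 z).re) / 2 := by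
  have hdouble : (fourier 2 z).re = circleCos z ^ 2 - (fourier 1 z).im ^ 2 := by
    rw [show (2 : ℤ) = 1 + 1 from rfl, fourier_add, Complex.mul_re, circleCos, sq, sq]
  linarith [circleCos_sq_add_im_sq z]

lemma finite_preimage_circleCos (c : ℝ) : (circleCos ⁻¹' {c}).Finite := by
  refine Set.Finite.of_injOn (f := fun z => (fourier 1 z).im) (t := {√(1 - c ^ 2), -√(1 - c ^ 2)})
    ?_ ?_ (Set.toFinite _)
  · rintro z rfl
    have him : (fourier 1 z).im ^ 2 = √(1 - circleCos z ^ 2) ^ 2 := by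
      rw [← eq_sub_of_add_eq' (circleCos_sq_add_im_sq z), Real.sqrt_sq_eq_abs, sq_abs]
    exact sq_eq_sq_iff_eq_or_eq_neg.1 him
  · intro z hz w hw hzw
    have hzw' : fourier 1 z = fourier 1 w := Complex.ext (hz.trans hw.symm) hzw
    rw [fourier_one, fourier_one] at hzw'
    exact AddCircle.injective_toCircle one_ne_zero (Subtype.ext hzw')

lemma nullSingletonClass_map_circleCos : NullSingletonClass (haarAddCircle.map circleCos) :=
  have : NullSingletonClass (haarAddCircle : Measure UnitAddCircle) :=
    nullSingletonClass_haarAddCircle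
  nullSingletonClass_map_of_countable_preimage continuous_circleCos.aemeasurable
    fun c => (finite_preimage_circleCos c).countable

lemma memLp_circleCos (p : ENNReal) : MemLp circleCos p haarAddCircle :=
  .of_bound continuous_circleCos.aestronglyMeasurable 1 (.of_forall abs_circleCos_le_one)

lemma integral_circleCos : ∫ z, circleCos z ∂haarAddCircle = 0 :=
  integral_re_fourier_eq_zero one_ne_zero

lemma variance_circleCos : Var[circleCos; haarAddCircle] = 1 / 2 := by
  have hint : Integrable (fun z : UnitAddCircle => (fourier 2 z).re) haarAddCircle :=
    (Complex.continuous_re.comp (fourier 2).continuous).integrable_of_hasCompactSupport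
      (.of_compactSpace _)
  rw [variance_of_integral_eq_zero continuous_circleCos.aemeasurable integral_circleCos]
  simp only [circleCos_sq]
  rw [integral_div, integral_add (integrable_const 1) hint,
    integral_re_fourier_eq_zero two_ne_zero]
  simp

variable {Ω : Type*} {m : MeasurableSpace Ω} {P : Measure Ω}

lemma hasLaw_circleCos_comp {Z : Ω → UnitAddCircle} (hZ : HasLaw Z haarAddCircle P) :
    HasLaw (circleCos ∘ Z) (haarAddCircle.map circleCos) P :=
  HasLaw.comp (Y := circleCos) ⟨continuous_circleCos.aemeasurable, rfl⟩ hZ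

variable {Z : ℕ → Ω → UnitAddCircle}

lemma iIndepFun_circleCos_comp (hindep : iIndepFun Z P) :
    iIndepFun (fun n => circleCos ∘ Z n) P :=
  hindep.comp (fun _ => circleCos) fun _ => continuous_circleCos.measurable

lemma nullSingletonClass_map_sum_circleCos_div_sqrt
    (hZ : ∀ n, HasLaw (Z n) haarAddCircle P) (hindep : iIndepFun Z P) {N : ℕ} (hN : N ≠ 0) :
    NullSingletonClass (P.map fun x => (∑ n ∈ Finset.range N, circleCos (Z n x)) / √N) := by
  have hlaw (n : ℕ) := hasLaw_circleCos_comp (hZ n)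
  have : NullSingletonClass (P.map (circleCos ∘ Z 0)) :=
    (hlaw 0).map_eq ▸ nullSingletonClass_map_circleCos
  have : NullSingletonClass (P.map (∑ n ∈ Finset.range N, circleCos ∘ Z n)) :=
    nullSingletonClass_map_finsetSum (fun n => (hlaw n).aemeasurable)
      (iIndepFun_circleCos_comp hindep) (Finset.mem_range.2 (Nat.pos_of_ne_zero hN))
  have hmeas : AEMeasurable (∑ n ∈ Finset.range N, circleCos ∘ Z n) P :=
    Finset.aemeasurable_sum _ fun n _ => (hlaw n).aemeasurable
  have hsqrt : √(N : ℝ) ≠ 0 := by positivity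
  simpa using nullSingletonClass_map_div_const hmeas hsqrt

variable [IsProbabilityMeasure P]

theorem tendstoInDistribution_sum_cos {ι : Type*} {l : Filter ι} {s t : ι → ℝ}
    [∀ i, IsProbabilityMeasure (volume[|Set.Icc (s i) (t i)])]
    (hst : Tendsto (fun i => t i - s i) l atTop) {ω : ℕ → ℝ} (hω : LinearIndependent ℤ ω)
    (hZ : ∀ n, HasLaw (Z n) haarAddCircle P) (hindep : iIndepFun Z P) (N : ℕ) :
    TendstoInDistribution (fun _ u => ∑ n ∈ Finset.range N, Real.cos (u * ω n)) l
      (fun x => ∑ n ∈ Finset.range N, circleCos (Z n x)) (fun i => volume[|Set.Icc (s i) (t i)])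
      P := by
  have hlaw : HasLaw (fun x (n : Fin N) => Z n x) (Measure.pi fun _ => haarAddCircle) P :=
    (hindep.precomp Fin.val_injective).hasLaw_pi fun n => hZ n
  have hcont : Continuous fun z : UnitAddTorus (Fin N) => ∑ n, circleCos (z n) := by fun_prop
  simpa only [Function.comp_def, circleCos_torusLine, Finset.sum_range] using
    (tendstoInDistribution_torusLine hst (hω.comp _ Fin.val_injective) hlaw).continuous_comp hcont

theorem tendstoInDistribution_sum_circleCos_div_sqrt
    (hZ : ∀ n, HasLaw (Z n) haarAddCircle P) (hindep : iIndepFun Z P) :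
    TendstoInDistribution (fun (N : ℕ) x => (∑ n ∈ Finset.range N, circleCos (Z n x)) / √N) atTop
      (fun y => y / √2) (fun _ => P) (gaussianReal 0 1) := by
  have hlaw (n : ℕ) := hasLaw_circleCos_comp (hZ n)
  have hmean : ∫ x, circleCos (Z 0 x) ∂P = 0 :=
    ((hZ 0).integral_comp continuous_circleCos.aestronglyMeasurable).trans integral_circleCos
  have hvar : Var[circleCos ∘ Z 0; P] = 1 / 2 := by
    rw [(hlaw 0).variance_eq, variance_id_map continuous_circleCos.aemeasurable,
      variance_circleCos]
  have hgauss : HasLaw (fun y : ℝ => y / √2)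
      (gaussianReal 0 Var[circleCos ∘ Z 0; P].toNNReal) (gaussianReal 0 1) := by
    convert! gaussianReal_div_const (HasLaw.id (μ := gaussianReal 0 1)) √2 using 2
    · rw [zero_div]
    · rw [hvar]
      ext
      simp
  have hL2 : MemLp (circleCos ∘ Z 0) 2 P :=
    .comp_of_map (by rw [(hZ 0).map_eq]; exact memLp_circleCos 2) (hZ 0).aemeasurable
  have hclt := tendstoInDistribution_inv_sqrt_mul_sum_sub (X := fun n => circleCos ∘ Z n) hgauss hL2
    (iIndepFun_circleCos_comp hindep) fun n => (hlaw n).identDistrib (hlaw 0)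
  simpa only [hmean, mul_zero, sub_zero, inv_mul_eq_div, Function.comp_apply] using hclt

theorem tendsto_measureReal_sum_cos_div_sqrt_mem_Ioo {ι : Type*} {l : Filter ι} {s t : ι → ℝ}
    [∀ i, IsProbabilityMeasure (volume[|Set.Icc (s i) (t i)])]
    (hst : Tendsto (fun i => t i - s i) l atTop) {ω : ℕ → ℝ} (hω : LinearIndependent ℤ ω)
    (hZ : ∀ n, HasLaw (Z n) haarAddCircle P) (hindep : iIndepFun Z P) (N : ℕ) (a b : ℝ) :
    Tendsto (fun i => (volume[|Set.Icc (s i) (t i)]).real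
        {u | (∑ n ∈ Finset.range N, Real.cos (u * ω n)) / √N ∈ Set.Ioo a b}) l
      (𝓝 (P.real {x | (∑ n ∈ Finset.range N, circleCos (Z n x)) / √N ∈ Set.Ioo a b})) := by
  -- For `N = 0` the limit law is a point mass, to which the portmanteau theorem need not apply.
  rcases eq_or_ne N 0 with rfl | hN
  · by_cases h : (0 : ℝ) ∈ Set.Ioo a b <;> simp [h, tendsto_const_nhds]
  · have := nullSingletonClass_map_sum_circleCos_div_sqrt hZ hindep hN
    have hlim := (tendstoInDistribution_sum_cos hst hω hZ hindep N).continuous_comp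
      (continuous_id.div_const √N)
    exact tendsto_measureReal_preimage_Ioo
      (Z := fun x => (∑ n ∈ Finset.range N, circleCos (Z n x)) / √N) hlim a b

lemma measureReal_cond_Icc_two_mul {T : ℝ} (hT : 0 < T) (s : Set ℝ) :
    (volume[|Set.Icc T (2 * T)]).real s = (volume (Set.Icc T (2 * T) ∩ s)).toReal / T := by
  have hlength : 2 * T - T = T := by ring
  rw [measureReal_def, cond_apply measurableSet_Icc, Real.volume_Icc, hlength, ENNReal.toReal_mul,
    ENNReal.toReal_inv, ENNReal.toReal_ofReal hT.le, inv_mul_eq_div]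

theorem tendsto_volume_sum_cos_div_sqrt_mem_Ioo {ω : ℕ → ℝ} (hω : LinearIndependent ℤ ω)
    (hZ : ∀ n, HasLaw (Z n) haarAddCircle P) (hindep : iIndepFun Z P) (N : ℕ) (a b : ℝ) :
    Tendsto (fun T => (volume {u | u ∈ Set.Icc T (2 * T) ∧
        a < (∑ n ∈ Finset.range N, Real.cos (u * ω n)) / √N ∧
        (∑ n ∈ Finset.range N, Real.cos (u * ω n)) / √N < b}).toReal / T) atTop
      (𝓝 (P.real {x | (∑ n ∈ Finset.range N, circleCos (Z n x)) / √N ∈ Set.Ioo a b})) := by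
  have hlength (T : ℝ) : 2 * T - T = T := by ring
  have (T : Set.Ioi (0 : ℝ)) : IsProbabilityMeasure (volume[|Set.Icc (T : ℝ) (2 * T)]) :=
    cond_isProbabilityMeasure_of_finite (by simpa [hlength] using T.2.out) (by simp)
  have hst : Tendsto (fun T : Set.Ioi (0 : ℝ) => 2 * (T : ℝ) - T) atTop atTop := by
    simpa only [hlength, id] using tendsto_comp_val_Ioi_atTop.2 tendsto_id
  refine tendsto_comp_val_Ioi_atTop.1 ((tendsto_measureReal_sum_cos_div_sqrt_mem_Ioo hst hω hZ
    hindep N a b).congr fun T => ?_)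
  exact measureReal_cond_Icc_two_mul T.2 _

lemma measureReal_gaussianReal_Ioo {x₁ x₂ : ℝ} (hx : x₁ ≤ x₂) :
    (gaussianReal 0 1).real (Set.Ioo x₁ x₂) =
      1 / √(2 * π) * ∫ x in x₁..x₂, Real.exp (-x ^ 2 / 2) := by
  rw [measureReal_def, gaussianReal_apply_eq_integral _ one_ne_zero,
    ENNReal.toReal_ofReal (integral_nonneg fun x => gaussianPDFReal_nonneg _ _ _),
    intervalIntegral.integral_of_le hx, integral_Ioc_eq_integral_Ioo, ← integral_const_mul]
  simp [gaussianPDFReal]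

theorem tendsto_measureReal_sum_circleCos_div_sqrt_mem_Ioo
    (hZ : ∀ n, HasLaw (Z n) haarAddCircle P) (hindep : iIndepFun Z P) {x₁ x₂ : ℝ} (hx : x₁ ≤ x₂) :
    Tendsto (fun N : ℕ => P.real {x | (∑ n ∈ Finset.range N, circleCos (Z n x)) / √N ∈
        Set.Ioo (x₁ / √2) (x₂ / √2)}) atTop
      (𝓝 (1 / √(2 * π) * ∫ x in x₁..x₂, Real.exp (-x ^ 2 / 2))) := by
  have : NullSingletonClass ((gaussianReal 0 1).map id) :=
    Measure.map_id.symm ▸ nullSingletonClass_gaussianReal one_ne_zero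
  have : NullSingletonClass ((gaussianReal 0 1).map fun y => y / √2) :=
    nullSingletonClass_map_div_const aemeasurable_id (by positivity)
  have hscale : (fun y => y / √2) ⁻¹' Set.Ioo (x₁ / √2) (x₂ / √2) = Set.Ioo x₁ x₂ := by
    ext y
    simp [div_lt_div_iff_of_pos_right]
  rw [← measureReal_gaussianReal_Ioo hx, ← hscale]
  exact tendsto_measureReal_preimage_Ioo
    (tendstoInDistribution_sum_circleCos_div_sqrt hZ hindep) _ _

end CosineSums

theorem kac_clt_general {ω : ℕ → ℝ} (hω : LinearIndependent ℤ ω) (B : ℕ → ℝ → ℝ)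
    (hB : ∀ N u, B N u = ∑ n ∈ Finset.range N, Real.cos (u * ω n))
    (x₁ x₂ : ℝ) (hx : x₁ ≤ x₂) :
    ∃ L : ℕ → ℝ,
      (∀ N : ℕ,
        Tendsto (fun T : ℝ =>
          (volume {u : ℝ | u ∈ Set.Icc T (2 * T) ∧
            x₁ / √2 < B N u / √N ∧
            B N u / √N < x₂ / √2}).toReal / T)
          atTop (𝓝 (L N))) ∧
      Tendsto L atTop
        (𝓝 (1 / √(2 * π) * ∫ x in x₁..x₂, Real.exp (-x ^ 2 / 2))) := by
  obtain ⟨Ω, _, P, Z, _, hZ, hindep, _⟩ := exists_iid ℕ (haarAddCircle : Measure UnitAddCircle)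
  refine ⟨_, fun N => ?_, tendsto_measureReal_sum_circleCos_div_sqrt_mem_Ioo hZ hindep hx⟩
  simpa only [hB] using
    tendsto_volume_sum_cos_div_sqrt_mem_Ioo hω hZ hindep N (x₁ / √2) (x₂ / √2)

/-- Kac's central limit theorem: with `B_N(u) = ∑_{n=1}^N cos(u log p_n)`,
for all reals `x₁ < x₂`, the probability (for `u` uniform on `[T, 2T]`) that
`x₁/√2 < B_N(u)/√N < x₂/√2` has, for each fixed `N`, a limit as `T → ∞`, and these
limits tend, as `N → ∞`, to `(1/√(2π)) ∫_{x₁}^{x₂} e^{-x²/2} dx`. -/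
theorem kac_clt (B : ℕ → ℝ → ℝ)
    (hB : ∀ N u, B N u = ∑ n ∈ Finset.range N, Real.cos (u * Real.log (Nat.nth Nat.Prime n)))
    (x₁ x₂ : ℝ) (hx : x₁ < x₂) :
    ∃ L : ℕ → ℝ,
      (∀ N : ℕ,
        Tendsto (fun T : ℝ =>
          (volume {u : ℝ | u ∈ Set.Icc T (2 * T) ∧
            x₁ / Real.sqrt 2 < B N u / Real.sqrt N ∧
            B N u / Real.sqrt N < x₂ / Real.sqrt 2}).toReal / T)
          atTop (nhds (L N))) ∧
      Tendsto L atTop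
        (nhds ((1 / Real.sqrt (2 * π)) * ∫ x in x₁..x₂, Real.exp (-x ^ 2 / 2))) :=
  kac_clt_general linearIndependent_log_nth_prime B hB x₁ x₂ hx.le
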